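/- Let c₁, c₃ be real numbers with 0 < |c₃| ≤ |c₁| ≤ 1, set c₂ = c₁c₃, and for p ∈ [0,1] define the four-qubit discord value D(p) = f((1−p)⁴c₁) + f(c₃) − f(max((1−p)⁴|c₁|, |c₃|)) (which by the factorization (1±x∓xy∓y) = (1±x)(1∓y) equals the formula (1/4)∑ of the four terms (1+a−b−c)log₂(1+a−b−c) etc. with (a,b,c) = ((1−p)⁴c₁, (1−p)⁴c₂, c₃), minus f(max(|a|,|b|,|c|))). Then D(p) = f(min((1−p)⁴|c₁|, |c₃|)). Consequently, setting p₀ = 1 − (|c₃|/|c₁|)^{1/4}, the discord is frozen: D(p) = f(c₃) = f(|c₃|) for all p ∈ [0, p₀], while for p ∈ [p₀, 1] one has D(p) = f((1−p)⁴|c₁|), which is monotonically decreasing in p and vanishes at p = 1. -/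

import Mathlib

/-!
The function `f` is even, so `f ((1 - p) ^ 4 * c₁) = f ((1 - p) ^ 4 * |c₁|)` and `f c₃ = f |c₃|`.
Hence `D` is `f a + f b - f (max a b)` with `a = (1 - p) ^ 4 * |c₁|` and `b = |c₃|`, and this is
`f (min a b)`, since `{min a b, max a b} = {a, b}` (`D_eq_min`).

The threshold `p₀ = 1 - (|c₃| / |c₁|) ^ (1 / 4)` is where `a = b`: before it the minimum is
`|c₃|`, after it the minimum is `(1 - p) ^ 4 * |c₁|`. The decay after `p₀` follows from
monotonicity of `f` on `[0, 1]` (`f_le_f`): since `x log x` is convex on `[0, ∞)`, `f` is convex on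
`[-1, 1]`, and an even convex function is monotone to the right of `0`.
-/

noncomputable section

/-- f(x) = ((1+x)/2)·log₂(1+x) + ((1-x)/2)·log₂(1-x) (with 0·log₂0 = 0, as logb 2 0 = 0). -/
def f (x : ℝ) : ℝ := (1 + x) / 2 * Real.logb 2 (1 + x) + (1 - x) / 2 * Real.logb 2 (1 - x)

/-- The four-qubit discord value of the state with coefficients ((1−p)⁴c₁, (1−p)⁴c₂, c₃)
(with c₂ = c₁c₃) after the phase-flip channel with parameter p acts on each qubit. -/
def D (c₁ c₃ p : ℝ) : ℝ :=
  f ((1 - p) ^ 4 * c₁) + f c₃ - f (max ((1 - p) ^ 4 * |c₁|) |c₃|)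

theorem f_neg (x : ℝ) : f (-x) = f x := by
  unfold f
  rw [sub_neg_eq_add, ← sub_eq_add_neg]
  ring

theorem f_abs (x : ℝ) : f |x| = f x := by
  rcases abs_choice x with h | h <;> rw [h]
  exact f_neg x

theorem f_mul_abs {a : ℝ} (ha : 0 ≤ a) (x : ℝ) : f (a * |x|) = f (a * x) := by
  rw [← f_abs (a * x), abs_mul, abs_of_nonneg ha]

theorem f_zero : f 0 = 0 := by simp [f]

theorem f_eq (x : ℝ) :
    f x = ((1 + x) * Real.log (1 + x) + (1 - x) * Real.log (1 - x)) / (2 * Real.log 2) := by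
  unfold f Real.logb
  have : Real.log 2 ≠ 0 := (Real.log_pos one_lt_two).ne'
  field_simp

/-- Each value `f y` with `0 ≤ y ≤ x` is at most `f x`: `y` lies between `-x` and `x`, where `f`
takes equal values, and `f` is convex there. -/
theorem f_le_f {x y : ℝ} (hy : 0 ≤ y) (hyx : y ≤ x) (hx : x ≤ 1) : f y ≤ f x := by
  rcases (hy.trans hyx).eq_or_lt with rfl | hx0
  · rw [le_antisymm hyx hy]
  -- `y = s * x + t * (-x)`
  obtain ⟨s, t, hs, ht, hst, hy'⟩ : ∃ s t : ℝ, 0 ≤ s ∧ 0 ≤ t ∧ s + t = 1 ∧ y = (s - t) * x :=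
    ⟨(x + y) / (2 * x), (x - y) / (2 * x), by positivity,
      div_nonneg (by linarith) (by linarith), by field_simp; ring, by field_simp; ring⟩
  have hp : 1 + x ∈ Set.Ici (0 : ℝ) := Set.mem_Ici.2 (by linarith)
  have hm : 1 - x ∈ Set.Ici (0 : ℝ) := Set.mem_Ici.2 (by linarith)
  have h1 := (Real.convexOn_mul_log).2 hp hm hs ht hst
  have h2 := (Real.convexOn_mul_log).2 hm hp hs ht hst
  simp only [smul_eq_mul] at h1 h2
  rw [show s * (1 + x) + t * (1 - x) = 1 + y by rw [hy']; linear_combination hst] at h1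
  rw [show s * (1 - x) + t * (1 + x) = 1 - y by rw [hy']; linear_combination hst] at h2
  rw [f_eq, f_eq]
  have := Real.log_pos one_lt_two
  gcongr ?_ / _
  obtain rfl : t = 1 - s := by linarith
  linarith

/-- The discord formula collapses to a minimum. As `(1 - p) ^ 4` is never negative, this needs no
restriction on `p`. -/
theorem D_eq_min (c₁ c₃ p : ℝ) : D c₁ c₃ p = f (min ((1 - p) ^ 4 * |c₁|) |c₃|) := by
  unfold D
  rw [← f_mul_abs (by positivity) c₁, ← f_abs c₃]
  rcases le_total ((1 - p) ^ 4 * |c₁|) |c₃| with h | h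
  · rw [max_eq_right h, min_eq_left h]; ring
  · rw [max_eq_left h, min_eq_right h]; ring

theorem rpow_quarter_pow {r : ℝ} (hr : 0 ≤ r) : (r ^ ((1 : ℝ) / 4)) ^ 4 = r := by
  rw [← Real.rpow_natCast, ← Real.rpow_mul hr]
  norm_num

/-- Frozen discord for four qubits under the phase flip channel. -/
theorem frozen_discord_four_qubits (c₁ c₃ : ℝ)
    (h₃ : 0 < |c₃|) (h₁₃ : |c₃| ≤ |c₁|) (h₁ : |c₁| ≤ 1) :
    (∀ p ∈ Set.Icc (0 : ℝ) 1, D c₁ c₃ p = f (min ((1 - p) ^ 4 * |c₁|) |c₃|)) ∧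
    (∀ p ∈ Set.Icc (0 : ℝ) (1 - (|c₃| / |c₁|) ^ ((1 : ℝ) / 4)),
      D c₁ c₃ p = f c₃ ∧ D c₁ c₃ p = f |c₃|) ∧
    (∀ p ∈ Set.Icc (1 - (|c₃| / |c₁|) ^ ((1 : ℝ) / 4)) 1,
      D c₁ c₃ p = f ((1 - p) ^ 4 * |c₁|)) ∧
    AntitoneOn (D c₁ c₃) (Set.Icc (1 - (|c₃| / |c₁|) ^ ((1 : ℝ) / 4)) 1) ∧
    D c₁ c₃ 1 = 0 := by
  have hc₁ : 0 < |c₁| := h₃.trans_le h₁₃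
  have hr : 0 ≤ |c₃| / |c₁| := by positivity
  have hq := rpow_quarter_pow hr
  have hq0 : 0 ≤ (|c₃| / |c₁|) ^ ((1 : ℝ) / 4) := by positivity
  set q := (|c₃| / |c₁|) ^ ((1 : ℝ) / 4)
  have hle : ∀ p ∈ Set.Icc (1 - q) 1, (1 - p) ^ 4 * |c₁| ≤ |c₃| := fun p hp => by
    rw [← le_div_iff₀ hc₁, ← hq]
    exact pow_le_pow_left₀ (by linarith [hp.2]) (by linarith [hp.1]) 4
  have hge : ∀ p ∈ Set.Icc 0 (1 - q), |c₃| ≤ (1 - p) ^ 4 * |c₁| := fun p hp => by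
    rw [← div_le_iff₀ hc₁, ← hq]
    exact pow_le_pow_left₀ hq0 (by linarith [hp.2]) 4
  have hlate : ∀ p ∈ Set.Icc (1 - q) 1, D c₁ c₃ p = f ((1 - p) ^ 4 * |c₁|) := fun p hp => by
    rw [D_eq_min, min_eq_left (hle p hp)]
  refine ⟨fun p _ => D_eq_min c₁ c₃ p, fun p hp => ?_, hlate, fun p hp p' hp' hpp' => ?_, ?_⟩
  · rw [D_eq_min, min_eq_right (hge p hp), f_abs]
    exact ⟨rfl, rfl⟩
  · rw [hlate p hp, hlate p' hp']
    refine f_le_f (by positivity) ?_ ((hle p hp).trans (h₁₃.trans h₁))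
    gcongr
    linarith [hp'.2]
  · rw [D_eq_min]
    simp [f_zero]
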